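/- arXiv:2512.17982 — 3 statements merged into one kernel-verified Lean document; each statement's English description precedes it below -/
import Mathlib

section
/- Let ℱ⁻¹ : ℓ²(ℤ²) → L²(𝕋²) be the inverse Fourier transform ℱ⁻¹f(z, w) = Σ_{n,k ∈ ℤ} f(n, k) zⁿ wᵏ and ℱ its inverse. For g = (m', n', k') ∈ ℋ₁ and the unitary representation U_g f(n, k) = f(n − n', k − k' − m'·(n − n')) on ℓ²(ℤ²), the conjugated operator satisfies (ℱ⁻¹ ∘ U_g ∘ ℱ) h(z, w) = h(z·w^{m'}, w) · z^{n'} · w^{k'} for all h ∈ L²(𝕋²) and almost every (z, w) ∈ 𝕋². -/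
/-- The discrete Heisenberg group `ℋ₁`: the set `ℤ³` equipped with the multiplication
`(x', y', z') * (x, y, z) = (x' + x, y' + y, z' + z + x' * y)`. -/
@[ext]
structure Heis where
  x : ℤ
  y : ℤ
  z : ℤ

namespace Heis

instance : Mul Heis := ⟨fun a b => ⟨a.x + b.x, a.y + b.y, a.z + b.z + a.x * b.y⟩⟩
instance : One Heis := ⟨⟨0, 0, 0⟩⟩
instance : Inv Heis := ⟨fun a => ⟨-a.x, -a.y, -a.z + a.x * a.y⟩⟩

theorem mul_def (a b : Heis) :
    a * b = ⟨a.x + b.x, a.y + b.y, a.z + b.z + a.x * b.y⟩ := rfl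
theorem one_def : (1 : Heis) = ⟨0, 0, 0⟩ := rfl
theorem inv_def (a : Heis) : a⁻¹ = ⟨-a.x, -a.y, -a.z + a.x * a.y⟩ := rfl

instance : Group Heis where
  mul_assoc a b c := by ext <;> simp [mul_def] <;> ring
  one_mul a := by ext <;> simp [mul_def, one_def]
  mul_one a := by ext <;> simp [mul_def, one_def]
  inv_mul_cancel a := by ext <;> simp [mul_def, one_def, inv_def] <;> ring

end Heis

open MeasureTheory

noncomputable instance : MeasurableSpace Circle := borel Circle
instance : BorelSpace Circle := ⟨rfl⟩

/-- Haar measure on the unit circle `𝕋 = {z ∈ ℂ : |z| = 1}`. -/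
noncomputable def circleHaar : Measure Circle := Measure.haar

/-- Haar (Lebesgue) measure on the two-torus `𝕋²`. -/
noncomputable def torus2Haar : Measure (Circle × Circle) := circleHaar.prod circleHaar

open MeasureTheory

namespace Heis

instance instHaarCircle : circleHaar.IsHaarMeasure := by
  unfold circleHaar; infer_instance

theorem shear_measurePreserving (m : ℤ) :
    MeasurePreserving (fun p : Circle × Circle => (p.1 * p.2 ^ m, p.2)) torus2Haar torus2Haar := by
  have h1 : MeasurePreserving (fun p : Circle × Circle => (p.1, p.2 * p.1 ^ m))
      (circleHaar.prod circleHaar) (circleHaar.prod circleHaar) := by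
    refine MeasurePreserving.skew_product (f := id) (g := fun a b => b * a ^ m)
      (MeasurePreserving.id _) ?_ ?_
    · exact Continuous.measurable (by fun_prop)
    · exact Filter.Eventually.of_forall fun a => map_mul_right_eq_self circleHaar (a ^ m)
  have hs : MeasurePreserving (Prod.swap : Circle × Circle → Circle × Circle)
      (circleHaar.prod circleHaar) (circleHaar.prod circleHaar) := Measure.measurePreserving_swap
  exact hs.comp (h1.comp hs)

theorem twist_norm (g : Heis) (p : Circle × Circle) (c : ℂ) :
    ‖c * (p.1 : ℂ) ^ g.y * (p.2 : ℂ) ^ g.z‖ = ‖c‖ := by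
  rw [norm_mul, norm_mul, norm_zpow, norm_zpow, Circle.norm_coe, Circle.norm_coe]
  simp

theorem twist_memLp (g : Heis) (h : Lp ℂ 2 torus2Haar) :
    MemLp (fun p : Circle × Circle =>
      h (p.1 * p.2 ^ g.x, p.2) * (p.1 : ℂ) ^ g.y * (p.2 : ℂ) ^ g.z) 2 torus2Haar := by
  have h1 : MemLp (fun p : Circle × Circle => h (p.1 * p.2 ^ g.x, p.2)) 2 torus2Haar :=
    (Lp.memLp h).comp_measurePreserving (shear_measurePreserving g.x)
  have hz : ∀ (z : Circle) (n : ℤ), (z : ℂ) ^ n = ((z ^ n : Circle) : ℂ) := by simp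
  refine h1.of_le ?_ (Filter.Eventually.of_forall fun p => (twist_norm g p _).le)
  refine (h1.1.mul ?_).mul ?_
  · simp only [hz]
    have hc : Continuous fun p : Circle × Circle => p.1 ^ g.y := by fun_prop
    exact ((continuous_subtype_val : Continuous fun z : Circle => (z : ℂ)).comp hc).measurable.aestronglyMeasurable
  · simp only [hz]
    have hc : Continuous fun p : Circle × Circle => p.2 ^ g.z := by fun_prop
    exact ((continuous_subtype_val : Continuous fun z : Circle => (z : ℂ)).comp hc).measurable.aestronglyMeasurable

theorem ae_shear {P : Circle × Circle → Prop} (m : ℤ) (hP : ∀ᵐ p ∂torus2Haar, P p) :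
    ∀ᵐ p : Circle × Circle ∂torus2Haar, P (p.1 * p.2 ^ m, p.2) :=
  (shear_measurePreserving m).quasiMeasurePreserving.ae hP

/-- The operator `h ↦ h(z w^{m'}, w) z^{n'} w^{k'}` on `L²(𝕋²)`. -/
noncomputable def twist (g : Heis) : Lp ℂ 2 torus2Haar →ₗᵢ[ℂ] Lp ℂ 2 torus2Haar where
  toFun h := (twist_memLp g h).toLp _
  map_add' a b := by
    rw [← MemLp.toLp_add]
    refine MemLp.toLp_congr _ _ ?_
    filter_upwards [ae_shear g.x (Lp.coeFn_add a b)] with p hp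
    simp only [hp, Pi.add_apply]
    ring
  map_smul' c a := by
    rw [RingHom.id_apply, ← MemLp.toLp_const_smul]
    refine MemLp.toLp_congr _ _ ?_
    filter_upwards [ae_shear g.x (Lp.coeFn_smul c a)] with p hp
    simp only [hp, Pi.smul_apply, smul_eq_mul]
    ring
  norm_map' a := by
    change ‖(twist_memLp g a).toLp _‖ = _
    rw [Lp.norm_toLp, Lp.norm_def]
    congr 1
    rw [← eLpNorm_comp_measurePreserving (Lp.aestronglyMeasurable a)
      (shear_measurePreserving g.x)]
    exact eLpNorm_congr_norm_ae (Filter.Eventually.of_forall fun p => twist_norm g p _)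

theorem coeFn_twist (g : Heis) (h : Lp ℂ 2 torus2Haar) :
    (twist g h : Circle × Circle → ℂ) =ᵐ[torus2Haar]
      fun p => h (p.1 * p.2 ^ g.x, p.2) * (p.1 : ℂ) ^ g.y * (p.2 : ℂ) ^ g.z :=
  (twist_memLp g h).coeFn_toLp

end Heis

/-- Let `ℱ⁻¹ : ℓ²(ℤ²) → L²(𝕋²)` be the inverse Fourier transform
`ℱ⁻¹f(z, w) = Σ_{n,k} f(n, k) zⁿ wᵏ` and `ℱ` its inverse.  For `g = (m', n', k') ∈ ℋ₁` and
the unitary representation `U_g f(n, k) = f(n − n', k − k' − m'·(n − n'))` on `ℓ²(ℤ²)`, the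
conjugated operator satisfies `(ℱ⁻¹ ∘ U_g ∘ ℱ) h(z, w) = h(z·w^{m'}, w) · z^{n'} · w^{k'}`
for all `h ∈ L²(𝕋²)` and almost every `(z, w) ∈ 𝕋²`. -/
theorem Heis.fourier_conjugated_representation
    (Finv : lp (fun _ : ℤ × ℤ => ℂ) 2 ≃ₗᵢ[ℂ] Lp ℂ 2 torus2Haar)
    (hFinv : ∀ f : lp (fun _ : ℤ × ℤ => ℂ) 2,
      Summable (fun s : ℤ × ℤ => f s) →
      (Finv f : Circle × Circle → ℂ) =ᵐ[torus2Haar]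
        fun p => ∑' s : ℤ × ℤ, f s * (p.1 : ℂ) ^ s.1 * (p.2 : ℂ) ^ s.2)
    (U : Heis → (lp (fun _ : ℤ × ℤ => ℂ) 2 ≃ₗᵢ[ℂ] lp (fun _ : ℤ × ℤ => ℂ) 2))
    (hU : ∀ (g : Heis) (f : lp (fun _ : ℤ × ℤ => ℂ) 2) (n k : ℤ),
      U g f (n, k) = f (n - g.y, k - g.z - g.x * (n - g.y)))
    (g : Heis) (h : Lp ℂ 2 torus2Haar) :
    (Finv (U g (Finv.symm h)) : Circle × Circle → ℂ) =ᵐ[torus2Haar]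
      fun p => h (p.1 * p.2 ^ g.x, p.2) * (p.1 : ℂ) ^ g.y * (p.2 : ℂ) ^ g.z := by
  classical
  have hsingle : ∀ (s : ℤ × ℤ) (c : ℂ),
      (Finv (lp.single 2 s c) : Circle × Circle → ℂ) =ᵐ[torus2Haar]
        fun p => c * (p.1 : ℂ) ^ s.1 * (p.2 : ℂ) ^ s.2 := by
    intro s c
    have hne : ∀ t : ℤ × ℤ, t ≠ s →
        (lp.single 2 s c : lp (fun _ : ℤ × ℤ => ℂ) 2) t = 0 := fun t ht => by
      simp [lp.single_apply, Pi.single_apply, ht]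
    refine (hFinv _ ?_).trans ?_
    · exact summable_of_ne_finset_zero (s := {s}) fun t ht => hne t (by simpa using ht)
    · refine Filter.Eventually.of_forall fun p => ?_
      change (∑' t : ℤ × ℤ, _) = _
      rw [tsum_eq_single s fun t ht => by rw [hne t ht]; simp]
      simp [lp.single_apply]
  have hUs : ∀ (s : ℤ × ℤ) (c : ℂ), U g (lp.single 2 s c) =
      lp.single 2 (s.1 + g.y, s.2 + g.z + g.x * s.1) c := by
    intro s c
    ext ⟨n, k⟩
    rw [hU]
    obtain ⟨a, b⟩ := s
    simp only [lp.single_apply, Pi.single_apply, Prod.mk.injEq]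
    congr 1
    apply propext
    constructor
    · rintro ⟨rfl, rfl⟩
      constructor <;> ring
    · rintro ⟨rfl, rfl⟩
      constructor <;> ring
  have key : ∀ f : lp (fun _ : ℤ × ℤ => ℂ) 2, Finv (U g f) = Heis.twist g (Finv f) := by
    intro f
    have hf := lp.hasSum_single (p := 2) (by norm_num) f
    have h1 := (hf.mapL ((U g).trans Finv).toContinuousLinearEquiv.toContinuousLinearMap)
    have h2 := (hf.mapL ((Heis.twist g).comp Finv.toLinearIsometry).toContinuousLinearMap)
    refine HasSum.unique (h1 : HasSum _ (Finv (U g f))) ?_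
    refine HasSum.congr_fun (h2 : HasSum _ (Heis.twist g (Finv f))) ?_
    intro s
    change Finv (U g (lp.single 2 s (f s))) = Heis.twist g (Finv (lp.single 2 s (f s)))
    rw [hUs]
    apply Lp.ext
    filter_upwards [hsingle (s.1 + g.y, s.2 + g.z + g.x * s.1) (f s),
      Heis.coeFn_twist g (Finv (lp.single 2 s (f s))),
      Heis.ae_shear g.x (hsingle s (f s))] with p h1 h2 h3
    rw [h1, h2, h3]
    have hz : (p.1 : ℂ) ≠ 0 := Circle.coe_ne_zero _
    have hw : (p.2 : ℂ) ≠ 0 := Circle.coe_ne_zero _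
    simp only [Circle.coe_mul, Circle.coe_zpow, mul_zpow, zpow_add₀ hz, zpow_add₀ hw, zpow_mul]
    ring
  rw [key, LinearIsometryEquiv.apply_symm_apply]
  exact Heis.coeFn_twist g h
end

section
/- Fix an integer p ≥ 1, real numbers ξ, η, α, and integers m, k, s. Let T be the linear operator on ℂ^p (with standard basis ε₀, …, ε_{p−1}) defined by T ε_j = exp(2πi(mξ + (k + j·m)η + ⌊(s + j)/p⌋·α)) · ε_{(j−s) mod p}. Then: (i) if p does not divide s, the trace of T is 0; (ii) if p divides s and m·η ∈ ℤ, the trace of T equals p · exp(2πi(mξ + kη + (s/p)·α)). -/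
/-- Fix an integer `p ≥ 1`, real numbers `ξ, η, α`, and integers `m, k, s`.  Let `T` be the
linear operator on `ℂᵖ` (with standard basis `ε₀, …, ε_{p−1}`) defined by
`T ε_j = exp(2πi(mξ + (k + j·m)η + ⌊(s + j)/p⌋·α)) · ε_{(j−s) mod p}`, i.e. the matrix whose
`(i, j)` entry is the above exponential factor if `i = (j − s) mod p` and `0` otherwise.
Then: (i) if `p` does not divide `s`, the trace of `T` is `0`; (ii) if `p` divides `s` and
`m·η ∈ ℤ`, the trace of `T` equals `p · exp(2πi(mξ + kη + (s/p)·α))`. -/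
theorem trace_of_heisenberg_representation_operator
    (p : ℕ) (hp : 1 ≤ p) (ξ η α : ℝ) (m k s : ℤ)
    (c : Fin p → ℂ)
    (hc : ∀ j : Fin p, c j =
      Complex.exp (2 * Real.pi * Complex.I *
        ((m : ℂ) * (ξ : ℂ) + ((k : ℂ) + ((j : ℕ) : ℂ) * (m : ℂ)) * (η : ℂ) +
          ((⌊((s + ((j : ℕ) : ℤ) : ℤ) : ℝ) / (p : ℝ)⌋ : ℤ) : ℂ) * (α : ℂ))))
    (T : Matrix (Fin p) (Fin p) ℂ)
    (hT : ∀ i j : Fin p, T i j =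
      if ((i : ℕ) : ℤ) = (((j : ℕ) : ℤ) - s) % (p : ℤ) then c j else 0) :
    (¬ (p : ℤ) ∣ s → T.trace = 0) ∧
    ((p : ℤ) ∣ s → (∃ l : ℤ, (m : ℝ) * η = (l : ℝ)) →
      T.trace = (p : ℂ) * Complex.exp (2 * Real.pi * Complex.I *
        ((m : ℂ) * (ξ : ℂ) + (k : ℂ) * (η : ℂ) + ((s / (p : ℤ) : ℤ) : ℂ) * (α : ℂ)))) := by
  have hp0 : (p : ℤ) ≠ 0 := by omega
  have hpR : (0 : ℝ) < (p : ℝ) := by exact_mod_cast hp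
  constructor
  · intro hs
    unfold Matrix.trace
    apply Finset.sum_eq_zero
    intro j _
    rw [Matrix.diag_apply, hT, if_neg]
    intro h
    apply hs
    have h2 : (p : ℤ) ∣ ((j : ℕ) : ℤ) - s - (((j : ℕ) : ℤ) - s) % (p : ℤ) :=
      Int.dvd_self_sub_emod
    rw [← h] at h2
    have h3 : ((j : ℕ) : ℤ) - s - ((j : ℕ) : ℤ) = -s := by ring
    rw [h3] at h2
    exact (dvd_neg).1 h2
  · rintro ⟨t, rfl⟩ ⟨l, hl⟩
    have hlC : (m : ℂ) * (η : ℂ) = (l : ℂ) := by exact_mod_cast congrArg (fun x : ℝ => (x : ℂ)) hl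
    have key : ∀ j : Fin p, T j j = Complex.exp (2 * Real.pi * Complex.I *
        ((m : ℂ) * (ξ : ℂ) + (k : ℂ) * (η : ℂ) + (t : ℂ) * (α : ℂ))) := by
      intro j
      have hj : ((j : ℕ) : ℝ) < (p : ℝ) := by exact_mod_cast j.2
      have hj0 : (0 : ℝ) ≤ ((j : ℕ) : ℝ) := by positivity
      have hfl : ⌊(((p : ℤ) * t + ((j : ℕ) : ℤ) : ℤ) : ℝ) / (p : ℝ)⌋ = t := by
        rw [Int.floor_eq_iff]
        push_cast
        constructor
        · rw [le_div_iff₀ hpR]; nlinarith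
        · rw [div_lt_iff₀ hpR]; nlinarith
      rw [hT, if_pos, hc, hfl, Complex.exp_eq_exp_iff_exists_int]
      · refine ⟨(j : ℕ) * l, ?_⟩
        push_cast
        rw [← hlC]
        ring
      · rw [Int.sub_mul_emod_self_left, Int.emod_eq_of_lt] <;> omega
    rw [Int.mul_ediv_cancel_left _ hp0]
    unfold Matrix.trace
    simp only [Matrix.diag_apply, key]
    simp
end

section
/- Let ℋ₁ be the discrete Heisenberg group and let ℤ be the trivial ℋ₁-module. The group cohomology of ℋ₁ with coefficients in ℤ satisfies: H⁰(ℋ₁, ℤ) ≅ ℤ, H¹(ℋ₁, ℤ) ≅ ℤ², H²(ℋ₁, ℤ) ≅ ℤ², H³(ℋ₁, ℤ) ≅ ℤ, and Hᵏ(ℋ₁, ℤ) = 0 for all k ≥ 4. -/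
open CategoryTheory


namespace Heis

/-! ### Generalities on dimension shifting -/

section General

variable {G : Type} [Group G]

/-- Functions `G → M` with `G` acting by right translation. -/
def funRho (G : Type) [Group G] (M : Type) [AddCommGroup M] : Representation ℤ G (G → M) where
  toFun h := LinearMap.funLeft ℤ M (fun u => u * h)
  map_one' := by ext; simp [LinearMap.funLeft_apply]
  map_mul' _ _ := by ext; simp [LinearMap.funLeft_apply, mul_assoc]

theorem funRho_apply {M : Type} [AddCommGroup M] (h : G) (f : G → M) (u : G) :
    funRho G M h f u = f (u * h) := rfl

/-- The representation `Fun(G, M)`. -/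
abbrev funRep (G : Type) [Group G] (M : Type) [AddCommGroup M] : Rep ℤ G := Rep.of (funRho G M)

theorem funRep_acyclic (M : Type) [AddCommGroup M] (n : ℕ) :
    Limits.IsZero (groupCohomology (funRep G M) (n + 1)) := by
  let S : Subgroup G := ⊥
  let T : Rep ℤ S := Rep.trivial ℤ S M
  have h1 : Limits.IsZero (groupCohomology T (n + 1)) :=
    isZero_groupCohomology_succ_of_subsingleton T n
  have h2 := h1.of_iso (groupCohomology.coindIso T (n + 1))
  have hmem : ∀ f : G → M, f ∈ Representation.coindV S.subtype T.ρ := by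
    intro f g h
    have hg : g = 1 := Subsingleton.elim _ _
    subst hg
    simp
  let e : (G → M) ≃ₗ[ℤ] Representation.coindV S.subtype T.ρ :=
    { toFun := fun f => ⟨f, hmem f⟩
      invFun := fun f => f.1
      map_add' := fun _ _ => rfl
      map_smul' := fun _ _ => rfl
      left_inv := fun _ => rfl
      right_inv := fun _ => rfl }
  exact h2.of_iso (groupCohomology.mapIso (A := Rep.coind S.subtype T) (B := funRep G M)
    (MulEquiv.refl G) e (fun g => by rfl) (n + 1))

/-- Invariants of a submodule of functions containing the constants. -/
noncomputable def invEquiv {M : Type} [AddCommGroup M] (W : Submodule ℤ (G → M))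
    (hW : ∀ g, W ≤ W.comap (funRho G M g)) (hc : ∀ m : M, (fun _ => m) ∈ W) :
    ((funRho G M).subrepresentation W hW).invariants ≃ₗ[ℤ] M where
  toFun f := f.1.1 1
  map_add' _ _ := rfl
  map_smul' _ _ := rfl
  invFun m := ⟨⟨fun _ => m, hc m⟩, fun _ => rfl⟩
  left_inv f := by
    apply Subtype.ext
    apply Subtype.ext
    funext u
    have := congrArg (fun w : W => w.1 1) (f.2 u)
    have h2 : f.1.1 (1 * u) = f.1.1 1 := this
    rw [one_mul] at h2
    exact h2.symm
  right_inv _ := rfl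

theorem const_of_inv {M : Type} [AddCommGroup M] (f : G → M)
    (hf : ∀ g, funRho G M g f = f) : f = fun _ => f 1 := by
  funext u
  have := congrFun (hf u) 1
  rw [funRho_apply, one_mul] at this
  exact this

/-- Invariants of `Fun(G, M)`. -/
noncomputable def invEquivTop (M : Type) [AddCommGroup M] :
    (funRho G M).invariants ≃ₗ[ℤ] M where
  toFun f := f.1 1
  map_add' _ _ := rfl
  map_smul' _ _ := rfl
  invFun m := ⟨fun _ => m, fun _ => rfl⟩
  left_inv f := by
    apply Subtype.ext
    exact (const_of_inv f.1 f.2).symm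
  right_inv _ := rfl

theorem shortExact_of {k : Type} [CommRing k] (X : ShortComplex (Rep.{0} k G))
    (hf : Function.Injective X.f.hom) (hg : Function.Surjective X.g.hom)
    (hex : ∀ y, X.g.hom y = 0 → ∃ x, X.f.hom x = y) : X.ShortExact where
  exact := by
    apply (forget₂ (Rep.{0} k G) (ModuleCat.{0} k)).reflects_exact_of_faithful
    rw [ShortComplex.moduleCat_exact_iff]
    exact hex
  mono_f := (Rep.mono_iff_injective _).2 hf
  epi_g := (Rep.epi_iff_surjective _).2 hg

theorem shift_succ {X : ShortComplex (Rep.{0} ℤ G)} (hX : X.ShortExact)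
    (hac : ∀ n, Limits.IsZero (groupCohomology X.X₂ (n + 1))) (n : ℕ) :
    Nonempty (groupCohomology X.X₁ (n + 2) ≅ groupCohomology X.X₃ (n + 1)) := by
  have := groupCohomology.isIso_δ_of_isZero hX (n + 1) (hac n) (hac (n + 1))
  exact ⟨(asIso (groupCohomology.δ hX (n + 1) (n + 1 + 1) rfl)).symm⟩

theorem shift_zero {X : ShortComplex (Rep.{0} ℤ G)} (hX : X.ShortExact)
    (hac : ∀ n, Limits.IsZero (groupCohomology X.X₂ (n + 1)))
    (h0 : ∀ y : X.X₂, (∀ g, X.X₂.ρ g y = y) → X.g.hom y = 0) :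
    Nonempty (groupCohomology X.X₁ 1 ≅ groupCohomology X.X₃ 0) := by
  have hepi := groupCohomology.epi_δ_of_isZero hX 0 (hac 0)
  have hz : groupCohomology.map (MonoidHom.id G) X.g 0 = 0 := by
    rw [← cancel_mono (groupCohomology.H0Iso X.X₃).hom,
      groupCohomology.map_id_comp_H0Iso_hom, Limits.zero_comp]
    have : (Rep.invariantsFunctor ℤ G).map X.g = 0 := by
      ext y
      apply Subtype.ext
      exact h0 y.1 y.2
    rw [this, Limits.comp_zero]
  have hex := groupCohomology.mapShortComplex₃_exact hX (i := 0) (j := 1) rfl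
  have hmono : Mono (groupCohomology.δ hX 0 1 rfl) := hex.mono_g hz
  have : IsIso (groupCohomology.δ hX 0 1 rfl) := isIso_of_mono_of_epi _
  exact ⟨(asIso (groupCohomology.δ hX 0 1 rfl)).symm⟩

end General

/-! ### Discrete integration -/

theorem exists_antidiff (v : ℤ → ℤ) : ∃ g : ℤ → ℤ, ∀ n, g (n + 1) - g n = v n := by
  refine ⟨fun n => ∑ i ∈ Finset.range n.toNat, v i - ∑ i ∈ Finset.range (-n).toNat, v (-i - 1), ?_⟩
  intro n
  obtain ⟨k, rfl | rfl⟩ := n.eq_nat_or_neg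
  · have h1 : ((k : ℤ) + 1).toNat = k + 1 := by omega
    have h2 : (-((k : ℤ) + 1)).toNat = 0 := by omega
    have h3 : (-(k : ℤ)).toNat = 0 := by omega
    simp only [h1, h2, h3, Int.toNat_natCast, Finset.sum_range_succ]
    simp
  · rcases k with _ | k
    · simp
    · have h1 : (-((k + 1 : ℕ) : ℤ) + 1).toNat = 0 := by omega
      have h2 : (-(-((k + 1 : ℕ) : ℤ) + 1)).toNat = k := by omega
      have h3 : (-((k + 1 : ℕ) : ℤ)).toNat = 0 := by omega
      have h4 : (- -((k + 1 : ℕ) : ℤ)).toNat = k + 1 := by omega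
      simp only [h1, h2, h3, h4, Finset.sum_range_succ]
      have : (-((k + 1 : ℕ) : ℤ)) = -(k : ℤ) - 1 := by push_cast; ring
      rw [this]
      simp

/-- A choice of discrete antiderivative. -/
noncomputable def intg (v : ℤ → ℤ) : ℤ → ℤ := (exists_antidiff v).choose

theorem intg_spec (v : ℤ → ℤ) (n : ℤ) : intg v (n + 1) = intg v n + v n := by
  have := (exists_antidiff v).choose_spec n
  unfold intg
  omega

/-! ### The resolution -/

/-- generators -/
def a : Heis := ⟨1, 0, 0⟩
def b : Heis := ⟨0, 1, 0⟩
def c : Heis := ⟨0, 0, 1⟩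

theorem a_mul (x y z : ℤ) : a * (⟨x, y, z⟩ : Heis) = ⟨x + 1, y, z + y⟩ := by
  ext <;> simp [mul_def, a] <;> ring
theorem b_mul (x y z : ℤ) : b * (⟨x, y, z⟩ : Heis) = ⟨x, y + 1, z⟩ := by
  ext <;> simp [mul_def, b] <;> ring
theorem c_mul (x y z : ℤ) : c * (⟨x, y, z⟩ : Heis) = ⟨x, y, z + 1⟩ := by
  ext <;> simp [mul_def, c] <;> ring

/-- The first differential. -/
def d0 : (Heis → ℤ) →ₗ[ℤ] (Heis → ℤ × ℤ) where
  toFun f u := (f (a * u) - f u, f (b * u) - f u)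
  map_add' f g := by ext u <;> simp <;> ring
  map_smul' r f := by ext u <;> simp <;> ring

/-- The auxiliary operator expressing the `c`-difference through the `a`- and `b`-differences. -/
def rr : (Heis → ℤ × ℤ) →ₗ[ℤ] (Heis → ℤ) where
  toFun f u := (f u).2 - (f (c * (a * u))).2 + (f (b * u)).1 - (f (c * u)).1
  map_add' f g := by ext u; simp; ring
  map_smul' r f := by ext u; simp; ring

/-- The second differential. -/
def d1 : (Heis → ℤ × ℤ) →ₗ[ℤ] (Heis → ℤ × ℤ) where
  toFun f u := (rr f (a * u) - rr f u - (f (c * u)).1 + (f u).1,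
    rr f (b * u) - rr f u - (f (c * u)).2 + (f u).2)
  map_add' f g := by ext u <;> simp <;> ring
  map_smul' r f := by
    rw [map_smul]
    ext u <;> simp [-zsmul_eq_mul] <;> ring

/-- The third differential. -/
def d2 : (Heis → ℤ × ℤ) →ₗ[ℤ] (Heis → ℤ) where
  toFun f u := (f u).2 - (f (c * (a * u))).2 + (f (b * u)).1 - (f (c * u)).1
  map_add' f g := by ext u; simp; ring
  map_smul' r f := by ext u; simp; ring

theorem d0_equiv (h : Heis) (f : Heis → ℤ) :
    d0 (funRho Heis ℤ h f) = funRho Heis (ℤ × ℤ) h (d0 f) := by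
  funext u
  simp [d0, funRho_apply, mul_assoc]

theorem rr_equiv (h : Heis) (f : Heis → ℤ × ℤ) :
    rr (funRho Heis (ℤ × ℤ) h f) = funRho Heis ℤ h (rr f) := by
  funext u
  simp [rr, funRho_apply, mul_assoc]

theorem d1_equiv (h : Heis) (f : Heis → ℤ × ℤ) :
    d1 (funRho Heis (ℤ × ℤ) h f) = funRho Heis (ℤ × ℤ) h (d1 f) := by
  funext u
  simp [d1, rr_equiv, funRho_apply, mul_assoc]

theorem d2_equiv (h : Heis) (f : Heis → ℤ × ℤ) :
    d2 (funRho Heis (ℤ × ℤ) h f) = funRho Heis ℤ h (d2 f) := by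
  funext u
  simp [d2, funRho_apply, mul_assoc]

theorem d1_d0 (f : Heis → ℤ) : d1 (d0 f) = 0 := by
  funext ⟨x, y, z⟩
  simp only [d1, d0, rr, LinearMap.coe_mk, AddHom.coe_mk, a_mul, b_mul, c_mul, Pi.zero_apply,
    Prod.mk_eq_zero]
  constructor <;> ring_nf

theorem d2_d1 (f : Heis → ℤ × ℤ) : d2 (d1 f) = 0 := by
  funext ⟨x, y, z⟩
  simp only [d1, d2, rr, LinearMap.coe_mk, AddHom.coe_mk, a_mul, b_mul, c_mul, Pi.zero_apply]
  ring_nf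

theorem d0_const (m : ℤ) : d0 (fun _ => m) = 0 := by
  funext u; simp [d0]
theorem d1_const (m : ℤ × ℤ) : d1 (fun _ => m) = 0 := by
  funext u; simp [d1, rr]
theorem d2_const (m : ℤ × ℤ) : d2 (fun _ => m) = 0 := by
  funext u; simp [d2]

/-- A function on `ℤ` with zero difference is constant. -/
theorem const_of_diff (g : ℤ → ℤ) (h : ∀ n, g (n + 1) = g n) (n : ℤ) : g n = g 0 := by
  induction n using Int.induction_on with
  | zero => rfl
  | succ i ih => rw [h, ih]
  | pred i ih => rw [← ih, ← h (-(i : ℤ) - 1)]; congr 1; ring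

theorem d0_exact (f : Heis → ℤ) (hf : d0 f = 0) : ∃ m : ℤ, (fun _ => m) = f := by
  have hA : ∀ x y z, f ⟨x + 1, y, z + y⟩ = f ⟨x, y, z⟩ := by
    intro x y z
    have := congrArg Prod.fst (congrFun hf ⟨x, y, z⟩)
    simp only [d0, LinearMap.coe_mk, AddHom.coe_mk, a_mul, Pi.zero_apply, Prod.fst_zero] at this
    linarith
  have hB : ∀ x y z, f ⟨x, y + 1, z⟩ = f ⟨x, y, z⟩ := by
    intro x y z
    have := congrArg Prod.snd (congrFun hf ⟨x, y, z⟩)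
    simp only [d0, LinearMap.coe_mk, AddHom.coe_mk, b_mul, Pi.zero_apply, Prod.snd_zero] at this
    linarith
  have hy : ∀ x y z, f ⟨x, y, z⟩ = f ⟨x, 0, z⟩ := fun x y z =>
    const_of_diff (fun y => f ⟨x, y, z⟩) (fun n => hB x n z) y
  have hx : ∀ x y z, f ⟨x, y, z⟩ = f ⟨0, 0, z⟩ := fun x y z => by
    rw [hy]
    exact const_of_diff (fun x => f ⟨x, 0, z⟩) (fun n => by
      have := hA n 0 z
      simpa using this) x
  have hz : ∀ x y z, f ⟨x, y, z⟩ = f ⟨0, 0, 0⟩ := fun x y z => by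
    rw [hx]
    exact const_of_diff (fun z => f ⟨0, 0, z⟩) (fun n => by
      have := hA 0 1 n
      rw [hx, hx 0 1 n] at this
      exact this) z
  exact ⟨f ⟨0, 0, 0⟩, funext fun ⟨x, y, z⟩ => (hz x y z).symm⟩

theorem rr_d0 (f : Heis → ℤ) (u : Heis) : rr (d0 f) u = f (c * u) - f u := by
  obtain ⟨x, y, z⟩ := u
  simp only [d0, rr, LinearMap.coe_mk, AddHom.coe_mk, a_mul, b_mul, c_mul]
  ring_nf

/-- Exactness at the first `Fun(G, ℤ²)`, when the auxiliary function vanishes. -/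
theorem d1_exact_aux (F : Heis → ℤ × ℤ) (hF : d1 F = 0) (hr : rr F = 0) : ∃ f, d0 f = F := by
  have hp : ∀ x y z, (F ⟨x, y, z⟩).1 = (F ⟨x, y, 0⟩).1 := fun x y z =>
    const_of_diff (fun z => (F ⟨x, y, z⟩).1) (fun n => by
      have := congrArg Prod.fst (congrFun hF ⟨x, y, n⟩)
      simp only [d1, hr, LinearMap.coe_mk, AddHom.coe_mk, c_mul, Pi.zero_apply,
        Prod.fst_zero] at this
      linarith) z
  have hq : ∀ x y z, (F ⟨x, y, z⟩).2 = (F ⟨x, y, 0⟩).2 := fun x y z =>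
    const_of_diff (fun z => (F ⟨x, y, z⟩).2) (fun n => by
      have := congrArg Prod.snd (congrFun hF ⟨x, y, n⟩)
      simp only [d1, hr, LinearMap.coe_mk, AddHom.coe_mk, c_mul, Pi.zero_apply,
        Prod.snd_zero] at this
      linarith) z
  have hpq : ∀ x y, (F ⟨x, y, 0⟩).2 - (F ⟨x + 1, y, 0⟩).2 + (F ⟨x, y + 1, 0⟩).1
      - (F ⟨x, y, 0⟩).1 = 0 := by
    intro x y
    have := congrFun hr ⟨x, y, 0⟩
    simp only [rr, LinearMap.coe_mk, AddHom.coe_mk, a_mul, b_mul, c_mul, Pi.zero_apply] at this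
    rw [hp x y (0 + 1), hq (x + 1)] at this
    exact this
  -- integrate along `y`, then along `x`
  let f1 : ℤ → ℤ → ℤ := fun x => intg (fun y => (F ⟨x, y, 0⟩).2)
  have hf1 : ∀ x y, f1 x (y + 1) = f1 x y + (F ⟨x, y, 0⟩).2 := fun x y => intg_spec _ y
  let f2 : ℤ → ℤ := intg (fun x => (F ⟨x, 0, 0⟩).1 - (f1 (x + 1) 0 - f1 x 0))
  have hf2 : ∀ x, f2 (x + 1) = f2 x + ((F ⟨x, 0, 0⟩).1 - (f1 (x + 1) 0 - f1 x 0)) :=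
    fun x => intg_spec _ x
  have key : ∀ x y, (F ⟨x, y, 0⟩).1 - (f1 (x + 1) y - f1 x y)
      = (F ⟨x, 0, 0⟩).1 - (f1 (x + 1) 0 - f1 x 0) := fun x y =>
    const_of_diff (fun y => (F ⟨x, y, 0⟩).1 - (f1 (x + 1) y - f1 x y)) (fun n => by
      have := hpq x n
      simp only [hf1]
      linarith) y
  refine ⟨fun u => f1 u.x u.y + f2 u.x, ?_⟩
  funext ⟨x, y, z⟩
  simp only [d0, LinearMap.coe_mk, AddHom.coe_mk, a_mul, b_mul]
  refine Prod.ext ?_ ?_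
  · rw [hp]
    have := key x y
    simp only [hf2]
    linarith
  · rw [hq]
    simp only [hf1]
    linarith

theorem d1_exact (F : Heis → ℤ × ℤ) (hF : d1 F = 0) : ∃ f, d0 f = F := by
  let f0 : Heis → ℤ := fun u => intg (fun z => rr F ⟨u.x, u.y, z⟩) u.z
  have h0 : ∀ u, f0 (c * u) = f0 u + rr F u := by
    rintro ⟨x, y, z⟩
    rw [c_mul]
    exact intg_spec _ z
  obtain ⟨f, hf⟩ := d1_exact_aux (F - d0 f0) (by rw [map_sub, hF, d1_d0, sub_zero]) (by
    rw [map_sub]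
    funext u
    rw [Pi.sub_apply, rr_d0, h0]
    simp)
  exact ⟨f + f0, by rw [map_add, hf]; simp⟩

theorem d2_exact (F : Heis → ℤ × ℤ) (hF : d2 F = 0) : ∃ f, d1 f = F := by
  let p : ℤ → ℤ → ℤ → ℤ := fun x y => intg (fun z => -(F ⟨x, y, z⟩).1)
  let q : ℤ → ℤ → ℤ → ℤ := fun x y => intg (fun z => -(F ⟨x, y, z⟩).2)
  have hp : ∀ x y z, p x y (z + 1) = p x y z + -(F ⟨x, y, z⟩).1 := fun x y z => intg_spec _ z
  have hq : ∀ x y z, q x y (z + 1) = q x y z + -(F ⟨x, y, z⟩).2 := fun x y z => intg_spec _ z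
  let w : ℤ → ℤ → ℤ → ℤ := fun x y z =>
    q x y z - q (x + 1) y (z + y + 1) + p x (y + 1) z - p x y (z + 1)
  have hw : ∀ x y z, w x y z = w x y 0 := fun x y z =>
    const_of_diff (fun z => w x y z) (fun n => by
      have := congrFun hF ⟨x, y, n⟩
      simp only [d2, LinearMap.coe_mk, AddHom.coe_mk, a_mul, b_mul, c_mul, Pi.zero_apply] at this
      have e : n + 1 + y + 1 = (n + y + 1) + 1 := by ring
      simp only [w, e]
      rw [hq x y n, hq (x + 1) y (n + y + 1), hp x (y + 1) n, hp x y (n + 1)]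
      linarith) z
  let p1 : ℤ → ℤ → ℤ := fun x => intg (fun y => - w x y 0)
  have hp1 : ∀ x y, p1 x (y + 1) = p1 x y + - w x y 0 := fun x y => intg_spec _ y
  let f : Heis → ℤ × ℤ := fun u => (p u.x u.y u.z + p1 u.x u.y, q u.x u.y u.z)
  have hr : rr f = 0 := by
    funext ⟨x, y, z⟩
    have := hw x y z
    simp only [rr, f, LinearMap.coe_mk, AddHom.coe_mk, a_mul, b_mul, c_mul, Pi.zero_apply, hp1]
    rw [← this]
    simp only [w]
    ring
  refine ⟨f, ?_⟩
  funext ⟨x, y, z⟩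
  simp only [d1, hr, LinearMap.coe_mk, AddHom.coe_mk, c_mul, Pi.zero_apply]
  refine Prod.ext ?_ ?_
  · simp only [f, hp]; ring
  · simp only [f, hq]; ring

theorem d2_surj (v : Heis → ℤ) : ∃ f, d2 f = v := by
  let g : ℤ → ℤ → ℤ → ℤ := fun x y z => intg (fun y => v ⟨x, y, z - y - 1⟩) y
  have hg : ∀ x y z, g x (y + 1) z = g x y z + v ⟨x, y, z - y - 1⟩ := fun x y z => intg_spec _ y
  refine ⟨fun u => (g u.x u.y (u.z + u.y), 0), ?_⟩
  funext ⟨x, y, z⟩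
  simp only [d2, LinearMap.coe_mk, AddHom.coe_mk, a_mul, b_mul, c_mul, hg]
  have e1 : z + (y + 1) = z + 1 + y := by ring
  have e2 : z + 1 + y - y - 1 = z := by ring
  rw [e1, e2]
  ring

/-! ### The short exact sequences -/

theorem ker1_le (g : Heis) : LinearMap.ker d1 ≤ (LinearMap.ker d1).comap (funRho Heis (ℤ × ℤ) g) := by
  intro f hf
  rw [Submodule.mem_comap, LinearMap.mem_ker, d1_equiv, LinearMap.mem_ker.1 hf, map_zero]

theorem ker2_le (g : Heis) : LinearMap.ker d2 ≤ (LinearMap.ker d2).comap (funRho Heis (ℤ × ℤ) g) := by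
  intro f hf
  rw [Submodule.mem_comap, LinearMap.mem_ker, d2_equiv, LinearMap.mem_ker.1 hf, map_zero]

/-- The kernel of `d1`. -/
abbrev K1 : Rep ℤ Heis := Rep.of ((funRho Heis (ℤ × ℤ)).subrepresentation (LinearMap.ker d1) ker1_le)

/-- The kernel of `d2`. -/
abbrev K2 : Rep ℤ Heis := Rep.of ((funRho Heis (ℤ × ℤ)).subrepresentation (LinearMap.ker d2) ker2_le)

/-- `0 → ℤ → Fun(G, ℤ) → K1 → 0` -/
noncomputable def X0 : ShortComplex (Rep.{0} ℤ Heis) where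
  X₁ := Rep.trivial ℤ Heis ℤ
  X₂ := funRep Heis ℤ
  X₃ := K1
  f := Rep.ofHom ⟨LinearMap.pi (fun _ => LinearMap.id), fun g => by rfl⟩
  g := Rep.ofHom ⟨d0.codRestrict (LinearMap.ker d1) d1_d0, fun g => by
    apply LinearMap.ext
    intro f
    exact Subtype.ext (d0_equiv g f)⟩
  zero := by
    apply Rep.hom_ext
    apply Representation.IntertwiningMap.ext
    apply LinearMap.ext
    intro m
    exact Subtype.ext (d0_const m)

/-- `0 → K1 → Fun(G, ℤ²) → K2 → 0` -/
noncomputable def X1 : ShortComplex (Rep.{0} ℤ Heis) where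
  X₁ := K1
  X₂ := funRep Heis (ℤ × ℤ)
  X₃ := K2
  f := Rep.ofHom ⟨(LinearMap.ker d1).subtype, fun g => by rfl⟩
  g := Rep.ofHom ⟨d1.codRestrict (LinearMap.ker d2) d2_d1, fun g => by
    apply LinearMap.ext
    intro f
    exact Subtype.ext (d1_equiv g f)⟩
  zero := by
    apply Rep.hom_ext
    apply Representation.IntertwiningMap.ext
    apply LinearMap.ext
    intro m
    exact Subtype.ext m.2

/-- `0 → K2 → Fun(G, ℤ²) → Fun(G, ℤ) → 0` -/
noncomputable def X2 : ShortComplex (Rep.{0} ℤ Heis) where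
  X₁ := K2
  X₂ := funRep Heis (ℤ × ℤ)
  X₃ := funRep Heis ℤ
  f := Rep.ofHom ⟨(LinearMap.ker d2).subtype, fun g => by rfl⟩
  g := Rep.ofHom ⟨d2, fun g => by
    apply LinearMap.ext
    intro f
    exact d2_equiv g f⟩
  zero := by
    apply Rep.hom_ext
    apply Representation.IntertwiningMap.ext
    apply LinearMap.ext
    intro m
    exact m.2

theorem X0_exact : X0.ShortExact := by
  apply shortExact_of
  · intro m n h
    exact congrFun h (1 : Heis)
  · rintro ⟨F, hF⟩
    obtain ⟨f, hf⟩ := d1_exact F hF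
    exact ⟨f, Subtype.ext hf⟩
  · intro f hf
    exact d0_exact f (congrArg Subtype.val hf)

theorem X1_exact : X1.ShortExact := by
  apply shortExact_of
  · exact Subtype.val_injective
  · rintro ⟨F, hF⟩
    obtain ⟨f, hf⟩ := d2_exact F hF
    exact ⟨f, Subtype.ext hf⟩
  · intro f hf
    exact ⟨⟨f, congrArg Subtype.val hf⟩, rfl⟩

theorem X2_exact : X2.ShortExact := by
  apply shortExact_of
  · exact Subtype.val_injective
  · exact d2_surj
  · intro f hf
    exact ⟨⟨f, hf⟩, rfl⟩

theorem H1_triv : Nonempty (groupCohomology (Rep.trivial ℤ Heis ℤ) 1 ≅ ModuleCat.of ℤ (ℤ × ℤ)) := by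
  obtain ⟨e⟩ := shift_zero X0_exact (funRep_acyclic ℤ) (fun y hy => by
    apply Subtype.ext
    have h := const_of_inv (G := Heis) (M := ℤ) y hy
    change d0 y = 0
    rw [h, d0_const])
  exact ⟨e ≪≫ groupCohomology.H0Iso _ ≪≫ (invEquiv (LinearMap.ker d1) ker1_le d1_const).toModuleIso⟩

theorem H1_K1 : Nonempty (groupCohomology K1 1 ≅ ModuleCat.of ℤ (ℤ × ℤ)) := by
  obtain ⟨e⟩ := shift_zero X1_exact (funRep_acyclic (ℤ × ℤ)) (fun y hy => by
    apply Subtype.ext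
    have h := const_of_inv (G := Heis) (M := ℤ × ℤ) y hy
    change d1 y = 0
    rw [h, d1_const])
  exact ⟨e ≪≫ groupCohomology.H0Iso _ ≪≫ (invEquiv (LinearMap.ker d2) ker2_le d2_const).toModuleIso⟩

theorem H1_K2 : Nonempty (groupCohomology K2 1 ≅ ModuleCat.of ℤ ℤ) := by
  obtain ⟨e⟩ := shift_zero X2_exact (funRep_acyclic (ℤ × ℤ)) (fun y hy => by
    have h := const_of_inv (G := Heis) (M := ℤ × ℤ) y hy
    change d2 y = 0
    rw [h, d2_const])
  exact ⟨e ≪≫ groupCohomology.H0Iso _ ≪≫ (invEquivTop (G := Heis) ℤ).toModuleIso⟩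

theorem shift0 (n : ℕ) :
    Nonempty (groupCohomology (Rep.trivial ℤ Heis ℤ) (n + 2) ≅ groupCohomology K1 (n + 1)) :=
  shift_succ X0_exact (funRep_acyclic ℤ) n

theorem shift1 (n : ℕ) : Nonempty (groupCohomology K1 (n + 2) ≅ groupCohomology K2 (n + 1)) :=
  shift_succ X1_exact (funRep_acyclic (ℤ × ℤ)) n

theorem shift2 (n : ℕ) :
    Nonempty (groupCohomology K2 (n + 2) ≅ groupCohomology (funRep Heis ℤ) (n + 1)) :=
  shift_succ X2_exact (funRep_acyclic (ℤ × ℤ)) n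

end Heis

/-- The group cohomology of the discrete Heisenberg group `ℋ₁` with coefficients in `ℤ`
(as a trivial module) satisfies `H⁰ ≅ ℤ`, `H¹ ≅ ℤ²`, `H² ≅ ℤ²`, `H³ ≅ ℤ` and `Hᵏ = 0`
for all `k ≥ 4`. -/
theorem Heis.group_cohomology :
    Nonempty (groupCohomology (Rep.trivial ℤ Heis ℤ) 0 ≅ ModuleCat.of ℤ ℤ) ∧
    Nonempty (groupCohomology (Rep.trivial ℤ Heis ℤ) 1 ≅ ModuleCat.of ℤ (ℤ × ℤ)) ∧
    Nonempty (groupCohomology (Rep.trivial ℤ Heis ℤ) 2 ≅ ModuleCat.of ℤ (ℤ × ℤ)) ∧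
    Nonempty (groupCohomology (Rep.trivial ℤ Heis ℤ) 3 ≅ ModuleCat.of ℤ ℤ) ∧
    ∀ k : ℕ, 4 ≤ k → Subsingleton (groupCohomology (Rep.trivial ℤ Heis ℤ) k) := by
  refine ⟨⟨groupCohomology.H0IsoOfIsTrivial (Rep.trivial ℤ Heis ℤ)⟩, Heis.H1_triv, ?_, ?_, ?_⟩
  · obtain ⟨e⟩ := Heis.shift0 0
    obtain ⟨e'⟩ := Heis.H1_K1
    exact ⟨e ≪≫ e'⟩
  · obtain ⟨e⟩ := Heis.shift0 1
    obtain ⟨e'⟩ := Heis.shift1 0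
    obtain ⟨e''⟩ := Heis.H1_K2
    exact ⟨e ≪≫ e' ≪≫ e''⟩
  · intro k hk
    obtain ⟨n, rfl⟩ := Nat.exists_eq_add_of_le' hk
    obtain ⟨e⟩ := Heis.shift0 (n + 2)
    obtain ⟨e'⟩ := Heis.shift1 (n + 1)
    obtain ⟨e''⟩ := Heis.shift2 n
    have h := (Heis.funRep_acyclic (G := Heis) ℤ n).of_iso (e ≪≫ e' ≪≫ e'')
    exact ModuleCat.subsingleton_of_isZero h
end
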